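/- Let G = ⟨a⟩ × ⟨b⟩ be free abelian of rank two and A a Schur ring over G such that ⟨a⟩ is an A-subgroup and the basic set containing b is contained in b⟨a⟩. Then the basic set D containing b satisfies either D = {b} or D = {a^{i_0} b, b} for some nonzero integer i_0. -/

import Mathlib

noncomputable def simpleQuantity (F : Type*) [Field F] {G : Type*} [Group G]
    (D : Finset G) : MonoidAlgebra F G :=
  ∑ g ∈ D, MonoidAlgebra.single g 1

structure SchurRing (F G : Type*) [Field F] [Group G] where
  parts : Set (Finset G)
  parts_nonempty : ∀ D ∈ parts, D.Nonempty
  cover : ∀ g : G, ∃ D ∈ parts, g ∈ D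
  eq_of_mem : ∀ D₁ ∈ parts, ∀ D₂ ∈ parts, ∀ g : G, g ∈ D₁ → g ∈ D₂ → D₁ = D₂
  one_mem : ({1} : Finset G) ∈ parts
  inv_mem : ∀ D ∈ parts, ∃ D' ∈ parts, ∀ g : G, g ∈ D' ↔ g⁻¹ ∈ D
  mul_mem : ∀ x ∈ Submodule.span F (simpleQuantity F '' parts),
    ∀ y ∈ Submodule.span F (simpleQuantity F '' parts),
    x * y ∈ Submodule.span F (simpleQuantity F '' parts)

noncomputable def SchurRing.span {F G : Type*} [Field F] [Group G] (A : SchurRing F G) :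
    Submodule F (MonoidAlgebra F G) :=
  Submodule.span F (simpleQuantity F '' A.parts)

def SchurRing.IsASet {F G : Type*} [Field F] [Group G] (A : SchurRing F G)
    (S : Set G) : Prop :=
  ∀ D ∈ A.parts, (∃ g ∈ D, g ∈ S) → ↑D ⊆ S

/-- The free abelian group of rank two, written multiplicatively. -/
abbrev Z2 := Multiplicative (ℤ × ℤ)

/-- The first generator `a` of `Z × Z`. -/
def ga : Z2 := Multiplicative.ofAdd (1, 0)

/-- The second generator `b` of `Z × Z`. -/
def gb : Z2 := Multiplicative.ofAdd (0, 1)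


/-- Sum of the elements of a finite set in the group ring over any semiring. -/
noncomputable def genQuantity (R : Type*) [CommRing R] (X : Finset Z2) : MonoidAlgebra R Z2 :=
  ∑ g ∈ X, MonoidAlgebra.single g 1

theorem simpleQuantity_eq_gen (F : Type*) [Field F] (X : Finset Z2) :
    simpleQuantity F X = genQuantity F X := rfl

theorem coeff_genQuantity (R : Type*) [CommRing R] (X : Finset Z2) (h : Z2) :
    (genQuantity R X).coeff h = if h ∈ X then 1 else 0 := by
  classical
  unfold genQuantity
  rw [MonoidAlgebra.coeff_sum, Finset.sum_apply']
  simp [Finsupp.single_apply]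

theorem coeff_eq_of_mem_span {F : Type*} [Field F] (A : SchurRing F Z2)
    {x : MonoidAlgebra F Z2} (hx : x ∈ Submodule.span F (simpleQuantity F '' A.parts))
    {E : Finset Z2} (hE : E ∈ A.parts) {g h : Z2} (hg : g ∈ E) (hh : h ∈ E) :
    x.coeff g = x.coeff h := by
  induction hx using Submodule.span_induction with
  | mem x hx =>
    obtain ⟨C, hC, rfl⟩ := hx
    rw [simpleQuantity_eq_gen, coeff_genQuantity, coeff_genQuantity]
    have : g ∈ C ↔ h ∈ C := by
      constructor
      · intro h1
        rw [A.eq_of_mem C hC E hE g h1 hg]; exact hh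
      · intro h1
        rw [A.eq_of_mem C hC E hE h h1 hh]; exact hg
    simp [this]
  | zero => simp
  | add x y _ _ h1 h2 => simp [h1, h2]
  | smul a x _ h1 => simp [h1]

theorem gen_mem_span {F : Type*} [Field F] (A : SchurRing F Z2) :
    ∀ (n : ℕ) (X : Finset Z2), X.card = n → A.IsASet (X : Set Z2) →
    simpleQuantity F X ∈ Submodule.span F (simpleQuantity F '' A.parts) := by
  intro n
  induction n using Nat.strong_induction_on with
  | _ n ih =>
    intro X hn hX
    rcases X.eq_empty_or_nonempty with rfl | ⟨g, hg⟩
    · simp [simpleQuantity]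
    · obtain ⟨E, hE, hgE⟩ := A.cover g
      have hEX : E ⊆ X := by
        have := hX E hE ⟨g, hgE, by simpa using hg⟩
        exact_mod_cast this
      have h1 : simpleQuantity F X = simpleQuantity F (X \ E) + simpleQuantity F E := by
        unfold simpleQuantity
        rw [Finset.sum_sdiff hEX]
      rw [h1]
      refine Submodule.add_mem _ (ih _ ?_ (X \ E) rfl ?_) (Submodule.subset_span ⟨E, hE, rfl⟩)
      · rw [← hn]
        apply Finset.card_lt_card
        refine ⟨Finset.sdiff_subset, fun h => ?_⟩
        have := h hg
        simp [hgE] at this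
      · rintro C hC ⟨c, hc, hcX⟩
        intro d hd
        simp only [Finset.coe_sdiff, Set.mem_sdiff, Finset.mem_coe] at hcX hd ⊢
        refine ⟨by simpa using hX C hC ⟨c, hc, by simpa using hcX.1⟩ hd, fun hdE => ?_⟩
        rw [A.eq_of_mem C hC E hE d hd hdE] at hc
        exact hcX.2 hc

theorem one_mem_span' {F : Type*} [Field F] (A : SchurRing F Z2) :
    (1 : MonoidAlgebra F Z2) ∈ Submodule.span F (simpleQuantity F '' A.parts) := by
  refine Submodule.subset_span ⟨{1}, A.one_mem, ?_⟩
  simp [simpleQuantity, MonoidAlgebra.one_def]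

theorem pow_mem_span' {F : Type*} [Field F] (A : SchurRing F Z2) {x : MonoidAlgebra F Z2}
    (hx : x ∈ Submodule.span F (simpleQuantity F '' A.parts)) (n : ℕ) :
    x ^ n ∈ Submodule.span F (simpleQuantity F '' A.parts) := by
  induction n with
  | zero => simpa using one_mem_span' A
  | succ n ih => rw [pow_succ]; exact A.mul_mem _ ih _ hx

theorem map_genQuantity {R S : Type*} [CommRing R] [CommRing S] (f : R →+* S) (X : Finset Z2) :
    MonoidAlgebra.mapRingHom Z2 f (genQuantity R X) = genQuantity S X := by
  simp [genQuantity, map_sum]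

theorem gen_pow_prime (p : ℕ) [Fact p.Prime] (X : Finset Z2) :
    genQuantity (ZMod p) X ^ p = genQuantity (ZMod p) (X.image (· ^ p)) := by
  have : CharP (MonoidAlgebra (ZMod p) Z2) p :=
    charP_of_injective_algebraMap (R := ZMod p)
      (FaithfulSMul.algebraMap_injective (ZMod p) (MonoidAlgebra (ZMod p) Z2)) p
  unfold genQuantity
  rw [sum_pow_char, Finset.sum_image]
  · simp
  · intro x _ y _ h
    exact pow_left_injective (Fact.out : p.Prime).ne_zero h

theorem isASet_pow_prime {F : Type*} [Field F] [CharZero F] (A : SchurRing F Z2)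
    (p : ℕ) (hp : p.Prime) (X : Finset Z2) (hX : A.IsASet (X : Set Z2)) :
    A.IsASet ((X.image (· ^ p) : Finset Z2) : Set Z2) := by
  have : Fact p.Prime := ⟨hp⟩
  rintro E hE ⟨g, hgE, hgX⟩ h hh
  have h1 := coeff_eq_of_mem_span A (pow_mem_span' A (gen_mem_span A _ X rfl hX) p) hE hgE hh
  rw [simpleQuantity_eq_gen, ← map_genQuantity (Int.castRingHom F), ← map_pow,
    MonoidAlgebra.coeff_mapRingHom, MonoidAlgebra.coeff_mapRingHom] at h1
  have h2 : (genQuantity ℤ X ^ p).coeff g = (genQuantity ℤ X ^ p).coeff h := by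
    exact Int.cast_injective (α := F) (by simpa using h1)
  have h3 := congrArg (Int.castRingHom (ZMod p)) h2
  rw [← MonoidAlgebra.coeff_mapRingHom, ← MonoidAlgebra.coeff_mapRingHom, map_pow,
    map_genQuantity, gen_pow_prime, coeff_genQuantity, coeff_genQuantity,
    if_pos (by exact_mod_cast hgX)] at h3
  by_contra hcon
  rw [if_neg (by exact_mod_cast hcon)] at h3
  exact one_ne_zero h3

theorem isASet_pow {F : Type*} [Field F] [CharZero F] (A : SchurRing F Z2)
    (m : ℕ) : ∀ (X : Finset Z2), A.IsASet (X : Set Z2) →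
    A.IsASet ((X.image (· ^ m) : Finset Z2) : Set Z2) := by
  induction m using induction_on_primes with
  | zero =>
    rintro X hX E hE ⟨g, hgE, hgX⟩ h hh
    simp only [pow_zero, Finset.coe_image, Set.mem_image] at hgX ⊢
    obtain ⟨x, hx, rfl⟩ := hgX
    rw [A.eq_of_mem E hE _ A.one_mem 1 hgE (by simp)] at hh
    exact ⟨x, hx, (Finset.mem_singleton.1 hh).symm⟩
  | one => intro X hX; simpa using hX
  | prime_mul p m hp ih =>
    intro X hX
    have := ih _ (isASet_pow_prime A p hp X hX)
    rw [Finset.image_image] at this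
    convert this using 3
    ext x : 1
    simp [pow_mul]

theorem isASet_part {F : Type*} [Field F] (A : SchurRing F Z2) {E : Finset Z2}
    (hE : E ∈ A.parts) : A.IsASet (E : Set Z2) := by
  rintro C hC ⟨g, hg, hgE⟩
  rw [A.eq_of_mem C hC E hE g hg (by exact_mod_cast hgE)]

theorem ga_zpow (i : ℤ) : ga ^ i = Multiplicative.ofAdd (i, 0) := by
  rw [ga, ← ofAdd_zsmul]; simp

theorem ga_zpow_inj {i j : ℤ} (h : ga ^ i = ga ^ j) : i = j := by
  rw [ga_zpow, ga_zpow] at h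
  exact congrArg Prod.fst (Multiplicative.ofAdd.injective h)

theorem dvd_of_part {F : Type*} [Field F] [CharZero F]
    (A : SchurRing F Z2) (ha : A.IsASet ↑(Subgroup.zpowers ga))
    {T : Finset Z2} (hT : T ∈ A.parts) {t s : ℤ} (ht : ga ^ t ∈ T) (hs : ga ^ s ∈ T) : t ∣ s := by
  obtain ⟨E, hE, hgE⟩ := A.cover (ga ^ t.sign)
  have h1 := isASet_pow A t.natAbs E (isASet_part A hE) T hT ⟨_, ht, by
    simp only [Finset.coe_image, Set.mem_image]
    refine ⟨_, hgE, ?_⟩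
    rw [← zpow_natCast, ← zpow_mul, Int.sign_mul_natAbs]⟩ hs
  simp only [Finset.coe_image, Set.mem_image] at h1
  obtain ⟨e, he, h2⟩ := h1
  have h3 := ha E hE ⟨_, hgE, ⟨_, rfl⟩⟩ he
  obtain ⟨j, rfl⟩ := h3
  simp only at h2
  rw [← zpow_natCast, ← zpow_mul] at h2
  rw [← ga_zpow_inj h2]
  exact Dvd.dvd.mul_left (Int.dvd_natAbs_self) _

theorem part_zpow {F : Type*} [Field F] [CharZero F]
    (A : SchurRing F Z2) (ha : A.IsASet ↑(Subgroup.zpowers ga))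
    {T : Finset Z2} (hT : T ∈ A.parts) {k : ℤ} (hk : ga ^ k ∈ T) {x : Z2} (hx : x ∈ T) :
    x = ga ^ k ∨ x = ga ^ (-k) := by
  obtain ⟨s, rfl⟩ := ha T hT ⟨_, hk, ⟨_, rfl⟩⟩ hx
  have h := Int.natAbs_dvd_natAbs.2 (dvd_of_part A ha hT hk hx)
  have h' := Int.natAbs_dvd_natAbs.2 (dvd_of_part A ha hT hx hk)
  rcases Int.natAbs_eq_natAbs_iff.1 (Nat.dvd_antisymm h h') with h | h
  · left; simp [h]
  · right; simp [h]

theorem coeff_gen_mul {R : Type*} [CommRing R] (T D : Finset Z2) (h : Z2) :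
    (genQuantity R T * genQuantity R D).coeff h = ((T.filter (fun t => t⁻¹ * h ∈ D)).card : R) := by
  conv_lhs => rw [genQuantity.eq_1 R T]
  rw [Finset.sum_mul, MonoidAlgebra.coeff_sum, Finset.sum_apply']
  simp [MonoidAlgebra.coeff_single_mul_apply, coeff_genQuantity]

/-- If `⟨a⟩` is an `A`-subgroup and the basic set `D` containing `b` lies in the
coset `b⟨a⟩`, then `D = {b}` or `D = {a^{i₀} b, b}` for some nonzero `i₀`. -/
theorem basic_set_in_coset {F : Type*} [Field F] [CharZero F]
    (A : SchurRing F Z2) (ha : A.IsASet ↑(Subgroup.zpowers ga))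
    (D : Finset Z2) (hD : D ∈ A.parts) (hbD : gb ∈ D)
    (hsub : ∀ g ∈ D, ∃ i : ℤ, g = gb * ga ^ i) :
    D = {gb} ∨ ∃ i₀ : ℤ, i₀ ≠ 0 ∧ D = {ga ^ i₀ * gb, gb} := by
  have hform : ∀ g ∈ D, g = ga ^ (Multiplicative.toAdd g).1 * gb := by
    intro g hg
    obtain ⟨i, rfl⟩ := hsub g hg
    simp [ga_zpow, gb, mul_comm]
  obtain ⟨gM, hgM, hM⟩ := D.exists_max_image (fun g => (Multiplicative.toAdd g).1) ⟨_, hbD⟩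
  obtain ⟨gm, hgm, hm⟩ := D.exists_min_image (fun g => (Multiplicative.toAdd g).1) ⟨_, hbD⟩
  set M := (Multiplicative.toAdd gM).1 with hMdef
  set m := (Multiplicative.toAdd gm).1 with hmdef
  have eM := hform gM hgM
  have em := hform gm hgm
  rw [← hMdef] at eM
  rw [← hmdef] at em
  have hfst : ∀ (i : ℤ), (Multiplicative.toAdd (ga ^ i * gb)).1 = i := by
    intro i; simp [ga_zpow, gb]
  have hgb0 : gb = ga ^ (0 : ℤ) * gb := by simp
  have key : ∀ s ∈ D, s = gM ∨ s = gm := by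
    obtain ⟨T, hT, hkT⟩ := A.cover (ga ^ (M - m))
    have hmem := A.mul_mem _ (Submodule.subset_span ⟨T, hT, rfl⟩) _
      (Submodule.subset_span ⟨D, hD, rfl⟩)
    intro s hs
    have h1 := coeff_eq_of_mem_span A hmem hD hgM hs
    rw [simpleQuantity_eq_gen, simpleQuantity_eq_gen, coeff_gen_mul, coeff_gen_mul] at h1
    have h2 : (T.filter (fun t => t⁻¹ * gM ∈ D)).card = (T.filter (fun t => t⁻¹ * s ∈ D)).card := by
      exact_mod_cast h1
    have h3 : 0 < (T.filter (fun t => t⁻¹ * gM ∈ D)).card := by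
      refine Finset.card_pos.2 ⟨ga ^ (M - m), Finset.mem_filter.2 ⟨hkT, ?_⟩⟩
      have : (ga ^ (M - m))⁻¹ * gM = gm := by
        rw [eM, em, ← zpow_neg, ← mul_assoc, ← zpow_add]; congr 2; ring
      rw [this]; exact hgm
    rw [h2] at h3
    obtain ⟨t, ht⟩ := Finset.card_pos.1 h3
    obtain ⟨htT, htD⟩ := Finset.mem_filter.1 ht
    have es := hform s hs
    have a1 := hM _ htD
    have a2 := hm _ htD
    have a3 := hM _ hs
    have a4 := hm _ hs
    generalize (Multiplicative.toAdd s).1 = σ at es a3 a4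
    subst es
    rcases part_zpow A ha hT hkT htT with rfl | rfl
    · rw [← zpow_neg, ← mul_assoc, ← zpow_add, hfst] at a1 a2
      left; rw [eM]; congr 2; omega
    · rw [← zpow_neg, ← mul_assoc, ← zpow_add, hfst] at a1 a2
      right; rw [em]; congr 2; omega
  have hDeq : D = {gM, gm} := by
    ext s
    simp only [Finset.mem_insert, Finset.mem_singleton]
    exact ⟨key s, by rintro (rfl | rfl) <;> assumption⟩
  rcases key gb hbD with hb | hb
  · by_cases h0 : m = 0
    · left
      rw [hDeq, ← hb, em, h0]; simp
    · right
      exact ⟨m, h0, by rw [hDeq, ← hb, ← em, Finset.pair_comm]⟩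
  · by_cases h0 : M = 0
    · left
      rw [hDeq, ← hb, eM, h0]; simp
    · right
      exact ⟨M, h0, by rw [hDeq, ← hb, ← eM]⟩
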